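/- Let n ≥ 1 be a natural number. Then the functions x ↦ x^{−3(n−1)}·w(f_n)(x) and x ↦ w(f_n)(x) are monotone increasing and positive on the interval (0, j₁(f_n')), where j₁(f_n') is the first positive zero of f_n'. Moreover, w(f_n)(x) > 0 for all x in (0, j₁(f_n)), where j₁(f_n) = j_{n+1/2,1} is the first positive zero of f_n. -/

import Mathlib

/-- Determinant of the 3x3 Hankel-Wronskian matrix of h (rows of 2nd..4th derivatives). -/
noncomputable def w (f : ℝ → ℝ) (x : ℝ) : ℝ :=
  Matrix.det !![deriv^[2] f x, deriv f x, f x;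
    deriv^[3] f x, deriv^[2] f x, deriv f x;
    deriv^[4] f x, deriv^[3] f x, deriv^[2] f x]

/-- Bessel function of the first kind (for `x > 0`). -/
noncomputable def besselJ (ν : ℝ) (x : ℝ) : ℝ :=
  ∑' k : ℕ, (-1 : ℝ) ^ k / ((Nat.factorial k : ℝ) * Real.Gamma ((k : ℝ) + ν + 1)) *
    (x / 2) ^ (2 * (k : ℝ) + ν)

/-- `fn n x = √(π/2)·x^(n+1/2)·J_(n+1/2)(x)`, via the equivalent recursive definition
`fn 0 = sin`, `fn (n+1) x = ∫_0^x t·fn n t dt`. -/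
noncomputable def fn : ℕ → ℝ → ℝ
  | 0 => fun x => Real.sin x
  | n + 1 => fun x => ∫ t in (0:ℝ)..x, t * fn n t

/-- First positive zero of a function on `(0,∞)`. -/
noncomputable def j1 (g : ℝ → ℝ) : ℝ := sInf {x : ℝ | 0 < x ∧ g x = 0}

/-!
Put `f = f_{m+1}` and `g = f_m`, so that `f' = x g` and `x g' = (2m + 1) g - f`. These relations
eliminate all derivatives from `w f`, leaving `w f = 4 (m + 1) / x² * P` with a cubic form `P` in
`(f, g)`, and they give a chain of Euler type equations

* `x P' = (3m + 2) P + g F`,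
* `x F' = (2m + 1) F + 3 x² G`,
* `x G' = (2m + 2) G + 2 m (m + 1) g²`.

Whenever `x H' = k H + R` with `R > 0`, the quotient `H / x ^ k` is strictly increasing, and
`H > 0` if that quotient vanishes at the origin. As long as `g > 0`, this makes `G`, `F` and `P`
positive in turn, and `P / x ^ (3m + 2)` increasing. If `f b > 0` but `g b ≤ 0`, all terms of `P`
are nonnegative at `b`. If `f > 0` on `(0, b]` and `g b > 0`, then `g > 0` on all of `(0, b]`,
because `g / x ^ (2m + 1)` is decreasing where `f > 0`.

Integrating the Bessel series termwise gives `∫ t in 0..x, t ^ (ν + 1) J_ν = x ^ (ν + 1) J_{ν + 1}`,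
the recursion of `fn` up to normalisation; Legendre's duplication formula identifies the starting
term `J_{1/2}` with a multiple of `sin x / √x`.
-/

open Set Filter Topology Asymptotics MeasureTheory

section EulerEquation

variable {k : ℝ} {H R : ℝ → ℝ}

lemma hasDerivAt_div_rpow_of_euler {x : ℝ} (hx : 0 < x)
    (hH : HasDerivAt H ((k * H x + R x) / x) x) :
    HasDerivAt (fun y => H y / y ^ k) (R x / x ^ (k + 1)) x := by
  refine (hH.div (Real.hasDerivAt_rpow_const (Or.inl hx.ne')) (by positivity)).congr_deriv ?_
  rw [Real.rpow_sub_one hx.ne', Real.rpow_add_one hx.ne']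
  field_simp
  ring

lemma strictMonoOn_div_rpow_of_euler {s : Set ℝ} (hs : Convex ℝ s) (hs0 : s ⊆ Ioi 0)
    (hH : ∀ x ∈ s, HasDerivAt H ((k * H x + R x) / x) x) (hR : ∀ x ∈ s, 0 < R x) :
    StrictMonoOn (fun x => H x / x ^ k) s := by
  have hderiv x (hx : x ∈ s) := hasDerivAt_div_rpow_of_euler (hs0 hx) (hH x hx)
  refine strictMonoOn_of_deriv_pos hs
    (fun x hx => (hderiv x hx).continuousAt.continuousWithinAt) fun x hx => ?_
  have hxs := interior_subset hx
  rw [(hderiv x hxs).deriv]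
  exact div_pos (hR x hxs) (Real.rpow_pos_of_pos (hs0 hxs) _)

lemma pos_of_strictMonoOn_of_tendsto_zero {K : ℝ → ℝ} {a b : ℝ} (hK : StrictMonoOn K (Ioc a b))
    (hab : a < b) (hlim : Tendsto K (𝓝[>] a) (𝓝 0)) : 0 < K b := by
  obtain ⟨c, hac, hcb⟩ := exists_between hab
  refine lt_of_le_of_lt ?_ (hK ⟨hac, hcb.le⟩ ⟨hab, le_rfl⟩ hcb)
  refine le_of_tendsto hlim ?_
  filter_upwards [Ioc_mem_nhdsGT hac] with x hx
  exact hK.monotoneOn ⟨hx.1, hx.2.trans hcb.le⟩ ⟨hac, hcb.le⟩ hx.2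

lemma pos_of_euler {b : ℝ} (hb : 0 < b)
    (hH : ∀ x ∈ Ioc 0 b, HasDerivAt H ((k * H x + R x) / x) x) (hR : ∀ x ∈ Ioc 0 b, 0 < R x)
    (hlim : Tendsto (fun x => H x / x ^ k) (𝓝[>] 0) (𝓝 0)) : 0 < H b := by
  have hmono := strictMonoOn_div_rpow_of_euler (convex_Ioc 0 b) (fun x hx => hx.1) hH hR
  exact (div_pos_iff_of_pos_right (by positivity)).1 <|
    pos_of_strictMonoOn_of_tendsto_zero (K := fun x => H x / x ^ k) hmono hb hlim

end EulerEquation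

section Asymptotics

lemma tendsto_div_rpow_of_isBigO {f : ℝ → ℝ} {r s : ℝ} (hf : f =O[𝓝[>] 0] fun x => x ^ r)
    (hsr : s < r) : Tendsto (fun x => f x / x ^ s) (𝓝[>] 0) (𝓝 0) := by
  have hrpow : Tendsto (fun x : ℝ => x ^ (r - s)) (𝓝[>] 0) (𝓝 0) := by
    have := (Real.continuousAt_rpow_const 0 (r - s) (Or.inr (by linarith))).tendsto
    rw [Real.zero_rpow (by linarith)] at this
    exact this.mono_left nhdsWithin_le_nhds
  refine IsBigO.trans_tendsto (IsBigO.congr' (hf.mul (isBigO_refl (fun x : ℝ => (x ^ s)⁻¹) _))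
    (by simp [div_eq_mul_inv]) ?_) hrpow
  filter_upwards [self_mem_nhdsWithin] with x (hx : 0 < x)
  rw [Real.rpow_sub hx, div_eq_mul_inv]

lemma tendsto_homogeneous_div_rpow {f g : ℝ → ℝ} {r k : ℝ} {d : ℕ} {Φ : ℝ → ℝ → ℝ → ℝ}
    (hf : f =O[𝓝[>] 0] fun x => x ^ r) (hg : g =O[𝓝[>] 0] fun x => x ^ r)
    (hΦ : Continuous fun p : ℝ × ℝ × ℝ => Φ p.1 p.2.1 p.2.2)
    (hom : ∀ c x u v, Φ x (c * u) (c * v) = c ^ d * Φ x u v) (hd : 0 < d) (hk : k < d * r) :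
    Tendsto (fun x => Φ x (f x) (g x) / x ^ k) (𝓝[>] 0) (𝓝 0) := by
  -- By homogeneity, `Φ x f g / x ^ k = Φ x (f / x ^ (k / d)) (g / x ^ (k / d))`.
  have hd' : (0 : ℝ) < d := by exact_mod_cast hd
  have hs : k / d < r := by rwa [div_lt_iff₀' hd']
  have hΦ0 : Φ 0 0 0 = 0 := by simpa [hd.ne'] using hom 0 0 0 0
  have hid : Tendsto (fun x : ℝ => x) (𝓝[>] 0) (𝓝 0) := nhdsWithin_le_nhds
  have hlim := (hΦ.tendsto (0, 0, 0)).comp <| hid.prodMk_nhds <|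
    (tendsto_div_rpow_of_isBigO hf hs).prodMk_nhds (tendsto_div_rpow_of_isBigO hg hs)
  rw [hΦ0] at hlim
  refine hlim.congr' ?_
  filter_upwards [self_mem_nhdsWithin] with x (hx : 0 < x)
  have hpow : (x ^ (k / d))⁻¹ ^ d = (x ^ k)⁻¹ := by
    rw [inv_pow, ← Real.rpow_mul_natCast hx.le, div_mul_cancel₀ _ hd'.ne']
  simp only [Function.comp_apply, div_eq_inv_mul, hom] at hpow ⊢
  rw [hpow]

end Asymptotics

/-- A pair `(f, g)` on `(0, ∞)` with `f' = x g` and `x g' = (2m + 1) g - f`; equivalently,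
`f'' - (2(m + 1) / x) f' + f = 0` and `g = f' / x`. The model is `f = x ^ (m + 3/2) J_{m + 3/2}`,
`g = x ^ (m + 1/2) J_{m + 1/2}`. -/
structure IsBesselPair (m : ℝ) (f g : ℝ → ℝ) : Prop where
  hasDerivAt_fst : ∀ ⦃x⦄, 0 < x → HasDerivAt f (x * g x) x
  hasDerivAt_snd : ∀ ⦃x⦄, 0 < x → HasDerivAt g (((2 * m + 1) * g x - f x) / x) x

/-- A Bessel pair with the decay at the origin of the Bessel functions of the first kind (as
opposed to those of the second kind). -/
structure IsRegularBesselPair (m : ℝ) (f g : ℝ → ℝ) : Prop extends IsBesselPair m f g where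
  isBigO_fst : f =O[𝓝[>] 0] fun x => x ^ (2 * m + 1)
  isBigO_snd : g =O[𝓝[>] 0] fun x => x ^ (2 * m + 1)

/-- The cubic form `P` with `w f = 4 (m + 1) / x² * P(x, f, g)` for a Bessel pair `(f, g)`. -/
def wCubic (m x u v : ℝ) : ℝ :=
  u ^ 3 - (3 * m + 2) * u ^ 2 * v + (x ^ 2 + (m + 1) * (2 * m + 1)) * u * v ^ 2
    - m * x ^ 2 * v ^ 3

/-- The quadratic form `F` with `x P' = (3m + 2) P + g F` along a Bessel pair, where `P` is
`wCubic`. -/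
def wCubicSource (m x u v : ℝ) : ℝ :=
  (x ^ 2 - (m + 1) * m) * u ^ 2 + (m + 1) * (m * (2 * m + 1) - 2 * x ^ 2) * u * v
    + x ^ 2 * (x ^ 2 - (m + 1) * (m - 1)) * v ^ 2

/-- The quadratic form `G` with `x F' = (2m + 1) F + 3x² G` along a Bessel pair, where `F` is
`wCubicSource`. -/
def wQuadraticSource (m x u v : ℝ) : ℝ :=
  u ^ 2 - 2 * (m + 1) * u * v + (x ^ 2 + m + 1) * v ^ 2

lemma wCubic_pos_of_nonpos {m x u v : ℝ} (hm : 0 ≤ m) (hu : 0 < u) (hv : v ≤ 0) :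
    0 < wCubic m x u v := by
  obtain ⟨s, rfl⟩ : ∃ s, v = -s := ⟨-v, (neg_neg v).symm⟩
  have hs : 0 ≤ s := neg_nonpos.1 hv
  have : wCubic m x u (-s) = u ^ 3 + ((3 * m + 2) * u ^ 2 * s
      + (x ^ 2 + (m + 1) * (2 * m + 1)) * u * s ^ 2 + m * x ^ 2 * s ^ 3) := by
    rw [wCubic]; ring
  rw [this]
  positivity

namespace IsBesselPair

variable {m x : ℝ} {f g : ℝ → ℝ} (h : IsBesselPair m f g)

include h

lemma hasDerivAt_wQuadraticSource (hx : 0 < x) :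
    HasDerivAt (fun y => wQuadraticSource m y (f y) (g y))
      (((2 * m + 2) * wQuadraticSource m x (f x) (g x) + 2 * (m + 1) * m * g x ^ 2) / x) x := by
  have hf := h.hasDerivAt_fst hx
  have hg := h.hasDerivAt_snd hx
  have hsq := hasDerivAt_pow 2 x
  refine (((hf.pow 2).sub ((hf.const_mul (2 * (m + 1))).mul hg)).add
    (((hsq.add_const m).add_const 1).mul (hg.pow 2))).congr_deriv ?_
  simp only [Nat.cast_ofNat, Nat.add_one_sub_one, pow_one, Pi.pow_apply, wQuadraticSource]
  field_simp
  ring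

lemma hasDerivAt_wCubicSource (hx : 0 < x) :
    HasDerivAt (fun y => wCubicSource m y (f y) (g y))
      (((2 * m + 1) * wCubicSource m x (f x) (g x)
        + 3 * x ^ 2 * wQuadraticSource m x (f x) (g x)) / x) x := by
  have hf := h.hasDerivAt_fst hx
  have hg := h.hasDerivAt_snd hx
  have hsq := hasDerivAt_pow 2 x
  refine (((hsq.sub_const ((m + 1) * m)).mul (hf.pow 2)).add
    (((((hsq.const_mul 2).const_sub (m * (2 * m + 1))).const_mul (m + 1)).mul hf).mul hg)).add
    ((hsq.mul (hsq.sub_const ((m + 1) * (m - 1)))).mul (hg.pow 2)) |>.congr_deriv ?_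
  simp only [Nat.cast_ofNat, Nat.add_one_sub_one, pow_one, Pi.pow_apply, Pi.mul_apply,
    wCubicSource, wQuadraticSource]
  field_simp
  ring

lemma hasDerivAt_wCubic (hx : 0 < x) :
    HasDerivAt (fun y => wCubic m y (f y) (g y))
      (((3 * m + 2) * wCubic m x (f x) (g x) + g x * wCubicSource m x (f x) (g x)) / x) x := by
  have hf := h.hasDerivAt_fst hx
  have hg := h.hasDerivAt_snd hx
  have hsq := hasDerivAt_pow 2 x
  refine (((hf.pow 3).sub (((hf.pow 2).const_mul (3 * m + 2)).mul hg)).add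
    (((hsq.add_const ((m + 1) * (2 * m + 1))).mul hf).mul (hg.pow 2))).sub
    ((hsq.const_mul m).mul (hg.pow 3)) |>.congr_deriv ?_
  simp only [Nat.cast_ofNat, Nat.add_one_sub_one, pow_one, Pi.pow_apply, Pi.mul_apply, wCubic,
    wCubicSource]
  field_simp
  ring

lemma deriv_fst : EqOn (deriv f) (fun x => x * g x) (Ioi 0) :=
  fun _ hx => (h.hasDerivAt_fst hx).deriv

lemma iterate_deriv_two_fst :
    EqOn (deriv^[2] f) (fun x => (2 * m + 2) * g x - f x) (Ioi 0) := by
  refine (h.deriv_fst.deriv isOpen_Ioi).trans fun x (hx : 0 < x) => HasDerivAt.deriv ?_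
  refine ((hasDerivAt_id' x).mul (h.hasDerivAt_snd hx)).congr_deriv ?_
  field_simp
  ring

lemma iterate_deriv_three_fst :
    EqOn (deriv^[3] f) (fun x => (2 * m + 2) * (((2 * m + 1) * g x - f x) / x) - x * g x)
      (Ioi 0) :=
  (h.iterate_deriv_two_fst.deriv isOpen_Ioi).trans fun _ hx =>
    (((h.hasDerivAt_snd hx).const_mul _).sub (h.hasDerivAt_fst hx)).deriv

lemma iterate_deriv_four_fst :
    EqOn (deriv^[4] f) (fun x => 4 * m * (m + 1) * (((2 * m + 1) * g x - f x) / x ^ 2)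
      - 4 * (m + 1) * g x + f x) (Ioi 0) := by
  refine (h.iterate_deriv_three_fst.deriv isOpen_Ioi).trans fun x (hx : 0 < x) =>
    HasDerivAt.deriv ?_
  have hf := h.hasDerivAt_fst hx
  have hg := h.hasDerivAt_snd hx
  refine ((((hg.const_mul _).sub hf).div (hasDerivAt_id' x) hx.ne').const_mul _).sub
    ((hasDerivAt_id' x).mul hg) |>.congr_deriv ?_
  simp only [Pi.sub_apply]
  field_simp
  ring

lemma w_fst (hx : 0 < x) : w f x = 4 * (m + 1) / x ^ 2 * wCubic m x (f x) (g x) := by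
  simp only [w, Matrix.det_fin_three, Matrix.of_apply, Matrix.cons_val', Matrix.cons_val_zero,
    Matrix.cons_val_one, Matrix.cons_val, h.deriv_fst hx, h.iterate_deriv_two_fst hx,
    h.iterate_deriv_three_fst hx, h.iterate_deriv_four_fst hx, wCubic]
  field_simp
  ring

end IsBesselPair

namespace IsRegularBesselPair

variable {m b : ℝ} {f g : ℝ → ℝ} (h : IsRegularBesselPair m f g) (hm : 0 ≤ m)

include h hm

lemma wQuadraticSource_pos (hb : 0 < b) (hg : ∀ x ∈ Ioc 0 b, 0 < g x) :
    0 < wQuadraticSource m b (f b) (g b) := by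
  -- For `m = 0` the Euler equation has no source term, but the form is then a sum of squares.
  rcases hm.eq_or_lt with rfl | hm
  · have hgb := hg b ⟨hb, le_rfl⟩
    have : wQuadraticSource 0 b (f b) (g b) = (f b - g b) ^ 2 + b ^ 2 * g b ^ 2 := by
      rw [wQuadraticSource]; ring
    rw [this]
    positivity
  · refine pos_of_euler (H := fun x => wQuadraticSource m x (f x) (g x)) hb
      (fun x hx => h.hasDerivAt_wQuadraticSource hx.1) (fun x hx => ?_) ?_
    · have := hg x hx
      positivity
    · refine tendsto_homogeneous_div_rpow (d := 2) h.isBigO_fst h.isBigO_snd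
        (by unfold wQuadraticSource; fun_prop) (fun c x u v => ?_) two_pos ?_
      · simp only [wQuadraticSource]; ring
      · push_cast; linarith

lemma wCubicSource_pos (hb : 0 < b) (hg : ∀ x ∈ Ioc 0 b, 0 < g x) :
    0 < wCubicSource m b (f b) (g b) := by
  refine pos_of_euler (H := fun x => wCubicSource m x (f x) (g x)) hb
      (fun x hx => h.hasDerivAt_wCubicSource hx.1) (fun x hx => ?_) ?_
  · have := h.wQuadraticSource_pos hm hx.1 fun y hy => hg y ⟨hy.1, hy.2.trans hx.2⟩
    have := hx.1
    positivity
  · refine tendsto_homogeneous_div_rpow (d := 2) h.isBigO_fst h.isBigO_snd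
      (by unfold wCubicSource; fun_prop) (fun c x u v => ?_) two_pos ?_
    · simp only [wCubicSource]; ring
    · push_cast; linarith

lemma wCubic_pos_of_snd_pos (hb : 0 < b) (hg : ∀ x ∈ Ioc 0 b, 0 < g x) :
    0 < wCubic m b (f b) (g b) := by
  refine pos_of_euler (H := fun x => wCubic m x (f x) (g x)) hb
      (fun x hx => h.hasDerivAt_wCubic hx.1) (fun x hx => ?_) ?_
  · exact mul_pos (hg x hx)
      (h.wCubicSource_pos hm hx.1 fun y hy => hg y ⟨hy.1, hy.2.trans hx.2⟩)
  · refine tendsto_homogeneous_div_rpow (d := 3) h.isBigO_fst h.isBigO_snd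
      (by unfold wCubic; fun_prop) (fun c x u v => ?_) three_pos ?_
    · simp only [wCubic]; ring
    · push_cast; linarith

lemma strictMonoOn_wCubic_div_rpow (hg : ∀ x ∈ Ioo 0 b, 0 < g x) :
    StrictMonoOn (fun x => wCubic m x (f x) (g x) / x ^ (3 * m + 2)) (Ioo 0 b) :=
  strictMonoOn_div_rpow_of_euler (convex_Ioo 0 b) (fun _ hx => hx.1)
    (fun _ hx => h.hasDerivAt_wCubic hx.1) fun x hx =>
      mul_pos (hg x hx) (h.wCubicSource_pos hm hx.1 fun y hy => hg y ⟨hy.1, hy.2.trans_lt hx.2⟩)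

lemma w_pos_of_snd_pos (hb : 0 < b) (hg : ∀ x ∈ Ioc 0 b, 0 < g x) : 0 < w f b := by
  have := h.wCubic_pos_of_snd_pos hm hb hg
  rw [h.w_fst hb]
  positivity

omit hm in
lemma snd_pos_of_fst_pos (hf : ∀ x ∈ Ioc 0 b, 0 < f x) (hgb : 0 < g b) :
    ∀ x ∈ Ioc 0 b, 0 < g x := by
  have hmono : StrictMonoOn (fun x => (-g) x / x ^ (2 * m + 1)) (Ioc 0 b) :=
    strictMonoOn_div_rpow_of_euler (convex_Ioc 0 b) (fun _ hx => hx.1) (R := f)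
      (fun x hx => (h.hasDerivAt_snd hx.1).neg.congr_deriv (by simp only [Pi.neg_apply]; ring)) hf
  intro x hx
  have hb : 0 < b := hx.1.trans_le hx.2
  have hle := hmono.monotoneOn hx ⟨hb, le_rfl⟩ hx.2
  simp only [Pi.neg_apply, neg_div, neg_le_neg_iff] at hle
  have := hx.1
  exact (div_pos_iff_of_pos_right (by positivity)).1
    ((show 0 < g b / b ^ (2 * m + 1) by positivity).trans_le hle)

lemma w_pos_of_fst_pos (hb : 0 < b) (hf : ∀ x ∈ Ioc 0 b, 0 < f x) : 0 < w f b := by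
  rcases le_or_gt (g b) 0 with hgb | hgb
  · have := wCubic_pos_of_nonpos (x := b) hm (hf b ⟨hb, le_rfl⟩) hgb
    rw [h.w_fst hb]
    positivity
  · exact h.w_pos_of_snd_pos hm hb (h.snd_pos_of_fst_pos hf hgb)

lemma strictMonoOn_w_div_rpow (hg : ∀ x ∈ Ioo 0 b, 0 < g x) :
    StrictMonoOn (fun x => w f x / x ^ (3 * m)) (Ioo 0 b) := by
  have hw : ∀ x ∈ Ioo 0 b, w f x / x ^ (3 * m)
      = 4 * (m + 1) * (wCubic m x (f x) (g x) / x ^ (3 * m + 2)) := by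
    intro x hx
    have := hx.1
    rw [h.w_fst hx.1, Real.rpow_add hx.1, Real.rpow_two]
    field_simp
  intro x hx y hy hxy
  simp only [hw x hx, hw y hy]
  exact mul_lt_mul_of_pos_left (h.strictMonoOn_wCubic_div_rpow hm hg hx hy hxy) (by positivity)

lemma strictMonoOn_w (hg : ∀ x ∈ Ioo 0 b, 0 < g x) : StrictMonoOn (w f) (Ioo 0 b) := by
  intro x hx y hy hxy
  have hlt := h.strictMonoOn_w_div_rpow hm hg hx hy hxy
  have hpow : x ^ (3 * m) ≤ y ^ (3 * m) := Real.rpow_le_rpow hx.1.le hxy.le (by positivity)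
  have hw : 0 < w f x :=
    h.w_pos_of_snd_pos hm hx.1 fun z hz => hg z ⟨hz.1, hz.2.trans_lt hx.2⟩
  have hx0 := hx.1
  have hy0 := hy.1
  calc w f x = x ^ (3 * m) * (w f x / x ^ (3 * m)) := by field_simp
    _ < y ^ (3 * m) * (w f y / y ^ (3 * m)) :=
      mul_lt_mul' hpow hlt (by positivity) (by positivity)
    _ = w f y := by field_simp

end IsRegularBesselPair

section FirstZero

lemma ne_zero_of_lt_j1 {g : ℝ → ℝ} {x : ℝ} (hx : x ∈ Ioo 0 (j1 g)) : g x ≠ 0 :=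
  fun h => hx.2.not_ge (csInf_le ⟨0, fun _ hy => hy.1.le⟩ ⟨hx.1, h⟩)

lemma j1_congr {g h : ℝ → ℝ} (hgh : ∀ x, 0 < x → (g x = 0 ↔ h x = 0)) : j1 g = j1 h :=
  congrArg sInf (Set.ext fun x => and_congr_right (hgh x))

lemma pos_of_lt_j1 {g : ℝ → ℝ} (hcont : Continuous g) (hpos : ∀ᶠ x in 𝓝[>] 0, 0 < g x) :
    ∀ x ∈ Ioo 0 (j1 g), 0 < g x := by
  intro x hx
  by_contra! hgx
  obtain ⟨y, hgy, hy⟩ := (hpos.and (Ioo_mem_nhdsGT hx.1)).exists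
  obtain ⟨z, hz, hgz⟩ := intermediate_value_Icc' hy.2.le hcont.continuousOn ⟨hgx, hgy.le⟩
  exact ne_zero_of_lt_j1 ⟨hy.1.trans_le hz.1, hz.2.trans_lt hx.2⟩ hgz

end FirstZero

section RiccatiBessel

lemma continuous_fn (n : ℕ) : Continuous (fn n) := by
  induction n with
  | zero => exact Real.continuous_sin
  | succ n ih =>
    have hcont : Continuous fun t => t * fn n t := by fun_prop
    exact intervalIntegral.continuous_primitive (fun a b => hcont.intervalIntegrable a b) 0

lemma hasDerivAt_fn_succ (n : ℕ) (x : ℝ) : HasDerivAt (fn (n + 1)) (x * fn n x) x := by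
  have hcont : Continuous fun t => t * fn n t := continuous_id.mul (continuous_fn n)
  exact hcont.integral_hasStrictDerivAt 0 x |>.hasDerivAt

lemma fn_apply_zero (n : ℕ) : fn n 0 = 0 := by
  cases n <;> simp [fn]

lemma fn_succ_eq_of_hasDerivAt {n : ℕ} {F : ℝ → ℝ} (hF : ∀ x, HasDerivAt F (x * fn n x) x)
    (hF0 : F 0 = 0) : fn (n + 1) = F := by
  have hcont : Continuous fun t => t * fn n t := continuous_id.mul (continuous_fn n)
  ext x
  calc fn (n + 1) x = ∫ t in (0 : ℝ)..x, t * fn n t := rfl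
    _ = F x - F 0 := intervalIntegral.integral_eq_sub_of_hasDerivAt (fun t _ => hF t)
        (hcont.intervalIntegrable 0 x)
    _ = F x := by rw [hF0, sub_zero]

lemma differentiable_fn : ∀ n, Differentiable ℝ (fn n)
  | 0 => Real.differentiable_sin
  | n + 1 => fun x => (hasDerivAt_fn_succ n x).differentiableAt

lemma mul_deriv_fn (n : ℕ) (x : ℝ) :
    x * deriv (fn n) x = (2 * n + 1) * fn n x - fn (n + 1) x := by
  induction n generalizing x with
  | zero =>
    have hfn : fn 1 = fun x => Real.sin x - x * Real.cos x := by
      refine fn_succ_eq_of_hasDerivAt (fun x => ?_) (by simp)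
      refine ((Real.hasDerivAt_sin x).sub
        ((hasDerivAt_id' x).mul (Real.hasDerivAt_cos x))).congr_deriv ?_
      simp [fn]
    rw [zero_add, hfn]
    simp [fn]
  | succ n ih =>
    have hfn : fn (n + 2) = fun x => (2 * n + 3) * fn (n + 1) x - x ^ 2 * fn n x := by
      refine fn_succ_eq_of_hasDerivAt (fun x => ?_) (by simp [fn_apply_zero])
      refine (((hasDerivAt_fn_succ n x).const_mul (2 * (n : ℝ) + 3)).sub
        ((hasDerivAt_pow 2 x).mul (differentiable_fn n x).hasDerivAt)).congr_deriv ?_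
      linear_combination -x * ih x
    rw [(hasDerivAt_fn_succ n x).deriv, hfn]
    push_cast
    ring

lemma fn_pos_of_lt_pi (n : ℕ) : ∀ x ∈ Ioo 0 Real.pi, 0 < fn n x := by
  induction n with
  | zero => exact fun x hx => Real.sin_pos_of_pos_of_lt_pi hx.1 hx.2
  | succ n ih =>
    intro x hx
    have hcont : Continuous fun t => t * fn n t := continuous_id.mul (continuous_fn n)
    exact intervalIntegral.intervalIntegral_pos_of_pos_on (hcont.intervalIntegrable _ _)
      (fun t ht => mul_pos ht.1 (ih t ⟨ht.1, ht.2.trans hx.2⟩)) hx.1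

lemma fn_pos_of_lt_j1 (n : ℕ) : ∀ x ∈ Ioo 0 (j1 (fn n)), 0 < fn n x :=
  pos_of_lt_j1 (continuous_fn n) <|
    mem_of_superset (Ioo_mem_nhdsGT Real.pi_pos) (fn_pos_of_lt_pi n)

lemma j1_deriv_fn_succ (n : ℕ) : j1 (deriv (fn (n + 1))) = j1 (fn n) :=
  j1_congr fun x hx => by simp [(hasDerivAt_fn_succ n x).deriv, hx.ne']

lemma abs_fn_le (n : ℕ) {x : ℝ} (hx : 0 ≤ x) : |fn n x| ≤ x ^ (2 * n + 1) := by
  induction n generalizing x with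
  | zero => simpa [fn, abs_of_nonneg hx] using Real.abs_sin_le_abs (x := x)
  | succ n ih =>
    calc |fn (n + 1) x| = ‖∫ t in (0 : ℝ)..x, t * fn n t‖ := rfl
      _ ≤ x * x ^ (2 * n + 1) * |x - 0| := by
          refine intervalIntegral.norm_integral_le_of_norm_le_const fun t ht => ?_
          rw [uIoc_of_le hx] at ht
          rw [norm_mul, Real.norm_of_nonneg ht.1.le]
          have := ht.1.le
          exact mul_le_mul ht.2 ((ih ht.1.le).trans (by gcongr; exact ht.2)) (norm_nonneg _) hx
      _ = x ^ (2 * (n + 1) + 1) := by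
          rw [sub_zero, abs_of_nonneg hx]; ring

lemma isBigO_fn {n : ℕ} {r : ℝ} (hr : r ≤ 2 * n + 1) : fn n =O[𝓝[>] 0] fun x => x ^ r := by
  refine IsBigO.of_bound 1 ?_
  filter_upwards [Ioc_mem_nhdsGT one_pos] with x hx
  rw [one_mul, Real.norm_of_nonneg (Real.rpow_nonneg hx.1.le r)]
  refine (abs_fn_le n hx.1.le).trans ?_
  rw [← Real.rpow_natCast]
  exact Real.rpow_le_rpow_of_exponent_ge hx.1 hx.2 (by exact_mod_cast hr)

lemma isRegularBesselPair_fn (m : ℕ) : IsRegularBesselPair m (fn (m + 1)) (fn m) where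
  hasDerivAt_fst x _ := hasDerivAt_fn_succ m x
  hasDerivAt_snd x hx := by
    rw [← mul_deriv_fn, mul_div_cancel_left₀ _ hx.ne']
    exact (differentiable_fn m x).hasDerivAt
  isBigO_fst := isBigO_fn (by push_cast; linarith)
  isBigO_snd := isBigO_fn le_rfl

end RiccatiBessel

section BesselSeries

/-- The `k`-th term of the power series `besselJ ν x`. -/
noncomputable def besselTerm (ν : ℝ) (k : ℕ) (x : ℝ) : ℝ :=
  (-1 : ℝ) ^ k / ((Nat.factorial k : ℝ) * Real.Gamma ((k : ℝ) + ν + 1)) *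
    (x / 2) ^ (2 * (k : ℝ) + ν)

variable {ν x : ℝ}

lemma besselTerm_succ (hν : -1 < ν) (hx : 0 < x) (k : ℕ) :
    besselTerm ν (k + 1) x = -((x / 2) ^ 2 / ((k + 1) * (k + ν + 1))) * besselTerm ν k x := by
  have hk : 0 < k + ν + 1 := by linarith [k.cast_nonneg (α := ℝ)]
  have := Real.Gamma_pos_of_pos hk
  have hexp : 2 * ((k + 1 : ℕ) : ℝ) + ν = 2 * k + ν + (2 : ℕ) := by push_cast; ring
  have harg : ((k + 1 : ℕ) : ℝ) + ν + 1 = k + ν + 1 + 1 := by push_cast; ring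
  rw [besselTerm, besselTerm, hexp, harg, Real.rpow_add_natCast (by positivity),
    Real.Gamma_add_one hk.ne', Nat.factorial_succ]
  push_cast
  field_simp
  ring

lemma besselTerm_ne_zero (hν : -1 < ν) (hx : 0 < x) (k : ℕ) : besselTerm ν k x ≠ 0 := by
  have := Real.Gamma_pos_of_pos (show 0 < k + ν + 1 by linarith [k.cast_nonneg (α := ℝ)])
  unfold besselTerm
  positivity

lemma summable_norm_besselTerm (hν : -1 < ν) (hx : 0 < x) :
    Summable fun k => ‖besselTerm ν k x‖ := by
  refine summable_of_ratio_test_tendsto_lt_one zero_lt_one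
    (Eventually.of_forall fun k => norm_ne_zero_iff.2 (besselTerm_ne_zero hν hx k)) ?_
  have hden : Tendsto (fun k : ℕ => ((k : ℝ) + 1) * (k + ν + 1)) atTop atTop :=
    (tendsto_natCast_atTop_atTop.atTop_add tendsto_const_nhds).atTop_mul_atTop₀
      ((tendsto_natCast_atTop_atTop.atTop_add tendsto_const_nhds).atTop_add tendsto_const_nhds)
  refine (tendsto_const_nhds (x := (x / 2) ^ 2).div_atTop hden).congr fun k => ?_
  have hk : 0 < k + ν + 1 := by linarith [k.cast_nonneg (α := ℝ)]
  rw [norm_norm, norm_norm, besselTerm_succ hν hx, norm_mul,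
    mul_div_cancel_right₀ _ (norm_ne_zero_iff.2 (besselTerm_ne_zero hν hx k)), norm_neg,
    Real.norm_of_nonneg (by positivity)]

lemma rpow_mul_besselTerm (hx : 0 < x) (k : ℕ) :
    x ^ (ν + 1) * besselTerm ν k x = (-1 : ℝ) ^ k /
      ((Nat.factorial k : ℝ) * Real.Gamma (k + ν + 1) * 2 ^ (2 * k + ν)) *
        x ^ (2 * k + 2 * ν + 1) := by
  have hpow : x ^ (2 * k + 2 * ν + 1) = x ^ (ν + 1) * x ^ (2 * k + ν) := by
    rw [← Real.rpow_add hx]; ring_nf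
  rw [besselTerm, Real.div_rpow hx.le two_pos.le, hpow]
  ring

lemma integral_rpow_mul_besselTerm (hν : -1 < ν) (hx : 0 < x) (k : ℕ) :
    ∫ t in Ioc 0 x, t ^ (ν + 1) * besselTerm ν k t = x ^ (ν + 1) * besselTerm (ν + 1) k x := by
  have hk : 0 < k + ν + 1 := by linarith [k.cast_nonneg (α := ℝ)]
  have hexp : 2 * (k : ℝ) + 2 * ν + 1 + 1 = 2 * (k + ν + 1) := by ring
  have hpow : x ^ (2 * (k + ν + 1)) = x ^ (ν + 1) * x ^ (2 * (k : ℝ) + (ν + 1)) := by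
    rw [← Real.rpow_add hx]; ring_nf
  rw [setIntegral_congr_fun measurableSet_Ioc fun t ht => rpow_mul_besselTerm ht.1 k,
    ← intervalIntegral.integral_of_le hx.le, intervalIntegral.integral_const_mul,
    integral_rpow (Or.inl (by linarith)), Real.zero_rpow (by linarith), hexp, hpow, besselTerm,
    ← add_assoc (k : ℝ), Real.Gamma_add_one hk.ne', Real.div_rpow hx.le two_pos.le,
    ← add_assoc (2 * (k : ℝ)) ν 1, Real.rpow_add_one two_ne_zero]
  have := Real.Gamma_pos_of_pos hk
  field_simp
  ring

lemma integrableOn_rpow_mul_besselTerm (hν : -1 < ν) (hx : 0 < x) (k : ℕ) :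
    IntegrableOn (fun t => t ^ (ν + 1) * besselTerm ν k t) (Ioc 0 x) := by
  have hk : -1 < 2 * k + 2 * ν + 1 := by linarith [k.cast_nonneg (α := ℝ)]
  have hintble := (intervalIntegral.intervalIntegrable_rpow' (a := 0) (b := x) hk).const_mul
    ((-1 : ℝ) ^ k / ((Nat.factorial k : ℝ) * Real.Gamma (k + ν + 1) * 2 ^ (2 * k + ν)))
  rw [intervalIntegrable_iff_integrableOn_Ioc_of_le hx.le] at hintble
  exact hintble.congr_fun (fun t ht => (rpow_mul_besselTerm ht.1 k).symm) measurableSet_Ioc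

lemma norm_besselTerm (hν : -1 < ν) (hx : 0 ≤ x) (k : ℕ) :
    ‖besselTerm ν k x‖ = (-1) ^ k * besselTerm ν k x := by
  have := Real.Gamma_pos_of_pos (show 0 < k + ν + 1 by linarith [k.cast_nonneg (α := ℝ)])
  rw [besselTerm, norm_mul, norm_div, norm_pow, norm_neg, norm_one, one_pow,
    Real.norm_of_nonneg (by positivity), Real.norm_of_nonneg (by positivity), ← mul_assoc,
    mul_div_assoc', ← mul_pow]
  norm_num

theorem integral_rpow_mul_besselJ (hν : -1 < ν) (hx : 0 < x) :
    ∫ t in (0 : ℝ)..x, t ^ (ν + 1) * besselJ ν t = x ^ (ν + 1) * besselJ (ν + 1) x := by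
  have hnorm : ∀ k, ∫ t in Ioc 0 x, ‖t ^ (ν + 1) * besselTerm ν k t‖
      = x ^ (ν + 1) * ‖besselTerm (ν + 1) k x‖ := by
    intro k
    rw [norm_besselTerm (by linarith) hx.le, mul_left_comm, ← integral_rpow_mul_besselTerm hν hx,
      ← integral_const_mul]
    refine setIntegral_congr_fun measurableSet_Ioc fun t ht => ?_
    simp only [norm_mul, norm_besselTerm hν ht.1.le,
      Real.norm_of_nonneg (Real.rpow_nonneg ht.1.le _)]
    ring
  have hsum : Summable fun k => ∫ t in Ioc 0 x, ‖t ^ (ν + 1) * besselTerm ν k t‖ := by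
    simpa only [hnorm] using
      (summable_norm_besselTerm (ν := ν + 1) (by linarith) hx).mul_left (x ^ (ν + 1))
  rw [intervalIntegral.integral_of_le hx.le]
  calc ∫ t in Ioc 0 x, t ^ (ν + 1) * besselJ ν t
      = ∫ t in Ioc 0 x, ∑' k, t ^ (ν + 1) * besselTerm ν k t := by
        simp only [tsum_mul_left]; rfl
    _ = ∑' k, ∫ t in Ioc 0 x, t ^ (ν + 1) * besselTerm ν k t :=
        (integral_tsum_of_summable_integral_norm
          (integrableOn_rpow_mul_besselTerm hν hx) hsum).symm
    _ = x ^ (ν + 1) * besselJ (ν + 1) x := by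
        simp only [integral_rpow_mul_besselTerm hν hx, tsum_mul_left]; rfl

lemma rpow_mul_besselTerm_one_half (hx : 0 < x) (k : ℕ) :
    √(Real.pi / 2) * x ^ (1 / 2 : ℝ) * besselTerm (1 / 2) k x =
      (-1) ^ k * x ^ (2 * k + 1) / (2 * k + 1).factorial := by
  have hdup : (k.factorial : ℝ) * Real.Gamma (k + 1 / 2 + 1)
      = (2 * k + 1).factorial * √Real.pi / 2 ^ (2 * k + 1) := by
    have := Real.Gamma_mul_Gamma_add_half (k + 1)
    have hcast : 2 * ((k : ℝ) + 1) = (2 * k + 1 : ℕ) + 1 := by push_cast; ring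
    rw [Real.Gamma_nat_eq_factorial, hcast,
      Real.Gamma_nat_eq_factorial, sub_add_cancel_right, Real.rpow_neg two_pos.le,
      Real.rpow_natCast] at this
    rw [add_right_comm, this]
    ring
  have hpow : x ^ (2 * k + 1) = x ^ (1 / 2 : ℝ) * x ^ (2 * (k : ℝ) + 1 / 2) := by
    rw [← Real.rpow_add hx, ← Real.rpow_natCast]
    push_cast
    ring_nf
  have htwo : (2 : ℝ) ^ (2 * k + 1) = √2 * 2 ^ (2 * (k : ℝ) + 1 / 2) := by
    rw [Real.sqrt_eq_rpow, ← Real.rpow_add two_pos, ← Real.rpow_natCast]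
    push_cast
    ring_nf
  have hpi := Real.pi_pos
  rw [besselTerm, hdup, Real.div_rpow hx.le two_pos.le, Real.sqrt_div hpi.le, hpow, htwo]
  field_simp

lemma rpow_mul_besselJ_one_half (hx : 0 < x) :
    √(Real.pi / 2) * x ^ (1 / 2 : ℝ) * besselJ (1 / 2) x = Real.sin x := by
  rw [Real.sin_eq_tsum]
  simp only [← rpow_mul_besselTerm_one_half hx, tsum_mul_left]
  rfl

theorem fn_eq_besselJ (n : ℕ) (hx : 0 < x) :
    fn n x = √(Real.pi / 2) * x ^ ((n : ℝ) + 1 / 2) * besselJ (n + 1 / 2) x := by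
  induction n generalizing x with
  | zero => simpa [fn] using (rpow_mul_besselJ_one_half hx).symm
  | succ n ih =>
    have hn : -1 < (n : ℝ) + 1 / 2 := by linarith [n.cast_nonneg (α := ℝ)]
    calc fn (n + 1) x = ∫ t in (0 : ℝ)..x, t * fn n t := rfl
      _ = ∫ t in (0 : ℝ)..x,
            √(Real.pi / 2) * (t ^ ((n : ℝ) + 1 / 2 + 1) * besselJ (n + 1 / 2) t) := by
          refine intervalIntegral.integral_congr_Ioo_of_le hx.le fun t ht => ?_
          simp only [ih ht.1, Real.rpow_add_one ht.1.ne']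
          ring
      _ = √(Real.pi / 2) * x ^ (((n + 1 : ℕ) : ℝ) + 1 / 2)
            * besselJ ((n + 1 : ℕ) + 1 / 2) x := by
          rw [intervalIntegral.integral_const_mul, integral_rpow_mul_besselJ hn hx,
            Nat.cast_succ, add_right_comm, mul_assoc]

lemma j1_fn_eq_j1_besselJ (n : ℕ) : j1 (fn n) = j1 (besselJ ((n : ℝ) + 1 / 2)) := by
  refine j1_congr fun x hx => ?_
  have hpos : 0 < √(Real.pi / 2) * x ^ ((n : ℝ) + 1 / 2) := by positivity
  rw [fn_eq_besselJ n hx, mul_eq_zero, or_iff_right hpos.ne']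

end BesselSeries

theorem stmt_19 (n : ℕ) (hn : 1 ≤ n) :
    MonotoneOn (fun x => (x ^ (3 * (n - 1)))⁻¹ * w (fn n) x)
      (Set.Ioo (0 : ℝ) (j1 (deriv (fn n)))) ∧
    (∀ x ∈ Set.Ioo (0 : ℝ) (j1 (deriv (fn n))), 0 < (x ^ (3 * (n - 1)))⁻¹ * w (fn n) x) ∧
    MonotoneOn (w (fn n)) (Set.Ioo (0 : ℝ) (j1 (deriv (fn n)))) ∧
    (∀ x ∈ Set.Ioo (0 : ℝ) (j1 (deriv (fn n))), 0 < w (fn n) x) ∧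
    (∀ x ∈ Set.Ioo (0 : ℝ) (j1 (fn n)), 0 < w (fn n) x) ∧
    j1 (fn n) = j1 (besselJ ((n : ℝ) + 1 / 2)) := by
  obtain ⟨m, rfl⟩ := Nat.exists_eq_add_of_le' hn
  have hpair := isRegularBesselPair_fn m
  have hm : (0 : ℝ) ≤ m := m.cast_nonneg
  have hg := fn_pos_of_lt_j1 m
  rw [j1_deriv_fn_succ, Nat.add_sub_cancel]
  have hpos : ∀ x ∈ Ioo 0 (j1 (fn m)), 0 < w (fn (m + 1)) x := fun x hx =>
    hpair.w_pos_of_snd_pos hm hx.1 fun y hy => hg y ⟨hy.1, hy.2.trans_lt hx.2⟩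
  refine ⟨?_, fun x hx => mul_pos (inv_pos.2 (pow_pos hx.1 _)) (hpos x hx),
    (hpair.strictMonoOn_w hm hg).monotoneOn, hpos, fun x hx => ?_, j1_fn_eq_j1_besselJ (m + 1)⟩
  · refine (hpair.strictMonoOn_w_div_rpow hm hg).monotoneOn.congr fun x _ => ?_
    simp only [div_eq_inv_mul, ← Real.rpow_natCast]
    push_cast
    rfl
  · exact hpair.w_pos_of_fst_pos hm hx.1 fun y hy =>
      fn_pos_of_lt_j1 (m + 1) y ⟨hy.1, hy.2.trans_lt hx.2⟩
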